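/- Logarithm characterization of solving a rough differential equation on ℝ^d: Let X = (x, 𝕏) be a weak-geometric p-rough path with control ω on [0,T], F : ℝ^d → L(W, ℝ^d) smooth (write F_w(a) := F(a)w), ψ a local logarithm on ℝ^d with open domain D, z : [a,b] → ℝ^d continuous ([a,b] ⊆ [0,T]), and W₀ ⊆ ℝ^d open convex with z([a,b]) ⊆ W₀ and W₀ × W₀ ⊆ D. For s ∈ [a,b] let G_s, H_s ∈ L(W ⊗ W, ℝ^d) be the linear extensions of the bilinear maps (w, w̃) ↦ (∂_{F_w(z_s)} F_{w̃})(z_s) (the directional derivative of a ↦ F_{w̃}(a) at a = z_s in the direction F_w(z_s)) and (w, w̃) ↦ ∂_{F_w(z_s)}[a ↦ (D₂ψ)(z_s, a) F_{w̃}(a)] evaluated at a = z_s. Then the following are equivalent: (1) there exist C < ∞ and δ > 0 such that |z_t − z_s − F_{x_{s,t}}(z_s) − G_s(𝕏_{s,t})| ≤ C ω(s,t)^{3/p} for all a ≤ s ≤ t ≤ b with t − s ≤ δ; (2) there exist C < ∞ and δ > 0 such that |ψ(z_s, z_t) − F_{x_{s,t}}(z_s) − H_s(𝕏_{s,t})|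 ≤ C ω(s,t)^{3/p} for all a ≤ s ≤ t ≤ b with t − s ≤ δ. -/

import Mathlib

noncomputable section

open scoped BigOperators

/-- `ℝ^n` with the Euclidean norm. -/
abbrev Euc (n : ℕ) : Type := EuclideanSpace ℝ (Fin n)

/-- The `i`-th standard basis vector of `ℝ^n`. -/
def eb {n : ℕ} (i : Fin n) : Euc n := EuclideanSpace.single i 1

/-- Tensor product of two Euclidean vectors, realized in `ℝ^{n×m}` with the Euclidean norm. -/
def tensorE {n m : ℕ} (v : Euc n) (w : Euc m) : EuclideanSpace ℝ (Fin n × Fin m) :=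
  (EuclideanSpace.equiv (Fin n × Fin m) ℝ).symm fun p => v p.1 * w p.2

/-- Application of the (unique) linear extension of a bilinear map `B` to a tensor
`X ∈ ℝ^n ⊗ ℝ^m ≅ ℝ^{n × m}`. -/
def tapply {n m : ℕ} {V : Type*} [NormedAddCommGroup V] [NormedSpace ℝ V]
    (B : Euc n → Euc m → V) (X : EuclideanSpace ℝ (Fin n × Fin m)) : V :=
  ∑ q : Fin n × Fin m, X q • B (eb q.1) (eb q.2)
/-- `ω` is a control on the simplex `{(s,t) : 0 ≤ s ≤ t ≤ T}`. -/
structure IsControl (T : ℝ) (ω : ℝ → ℝ → ℝ) : Prop where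
  cont : ContinuousOn (fun q : ℝ × ℝ => ω q.1 q.2)
    {q : ℝ × ℝ | 0 ≤ q.1 ∧ q.1 ≤ q.2 ∧ q.2 ≤ T}
  nonneg : ∀ ⦃s t : ℝ⦄, 0 ≤ s → s ≤ t → t ≤ T → 0 ≤ ω s t
  zero : ∀ ⦃s : ℝ⦄, 0 ≤ s → s ≤ T → ω s s = 0
  superadditive : ∀ ⦃s t u : ℝ⦄, 0 ≤ s → s ≤ t → t ≤ u → u ≤ T → ω s t + ω t u ≤ ω s u
/-- `(x, XX)` is a `p`-rough path with control `ω` on `[0,T]`. -/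
structure IsRoughPath (T p : ℝ) {k : ℕ} (ω : ℝ → ℝ → ℝ)
    (x : ℝ → Euc k) (XX : ℝ → ℝ → EuclideanSpace ℝ (Fin k × Fin k)) : Prop where
  cont_x : ContinuousOn x (Set.Icc 0 T)
  cont_XX : ContinuousOn (fun q : ℝ × ℝ => XX q.1 q.2)
    {q : ℝ × ℝ | 0 ≤ q.1 ∧ q.1 ≤ q.2 ∧ q.2 ≤ T}
  chen : ∀ ⦃s t u : ℝ⦄, 0 ≤ s → s ≤ t → t ≤ u → u ≤ T →
    XX s u = XX s t + XX t u + tensorE (x t - x s) (x u - x t)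
  bound_x : ∀ ⦃s t : ℝ⦄, 0 ≤ s → s ≤ t → t ≤ T → ‖x t - x s‖ ≤ ω s t ^ (1 / p)
  bound_XX : ∀ ⦃s t : ℝ⦄, 0 ≤ s → s ≤ t → t ≤ T → ‖XX s t‖ ≤ ω s t ^ (2 / p)
/-- The rough path `(x, XX)` is weak-geometric: the symmetric part of `XX s t` is
`(1/2) x_{s,t} ⊗ x_{s,t}`. -/
def IsWeakGeometric (T : ℝ) {k : ℕ} (x : ℝ → Euc k)
    (XX : ℝ → ℝ → EuclideanSpace ℝ (Fin k × Fin k)) : Prop :=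
  ∀ ⦃s t : ℝ⦄, 0 ≤ s → s ≤ t → t ≤ T → ∀ i j : Fin k,
    XX s t (i, j) + XX s t (j, i) = (x t - x s) i * (x t - x s) j
/-- `ψ` is a local logarithm on `ℝ^d` with open domain `D`. -/
structure IsLocalLog {d : ℕ} (D : Set (Euc d × Euc d)) (ψ : Euc d × Euc d → Euc d) : Prop where
  open_dom : IsOpen D
  smooth : ContDiffOn ℝ (⊤ : ℕ∞) ψ D
  diag_zero : ∀ x : Euc d, (x, x) ∈ D → ψ (x, x) = 0
  diag_deriv : ∀ x : Euc d, (x, x) ∈ D →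
    fderiv ℝ (fun w => ψ (x, w)) x = ContinuousLinearMap.id ℝ (Euc d)

/-- The second-order RDE coefficient `(w, w̃) ↦ (∂_{F_w(a)} F_{w̃})(a)`, i.e. the directional
derivative of `c ↦ F_{w̃}(c)` at `c = a` in the direction `F_w(a)`. -/
def rdeQuad {d k : ℕ} (F : Euc d → Euc k →L[ℝ] Euc d) (a : Euc d)
    (w wt : Euc k) : Euc d :=
  fderiv ℝ (fun c => F c wt) a (F a w)

/-! Since `[a, b]` is compact, both estimates only have to be checked near each diagonal point
`(r, r)`. There, writing `Δ = z_t - z_s`, `ε = ω(s,t)^{1/p}` and `S = D₂²ψ(z_s, z_s)`, Taylor's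
formula gives `ψ(z_s, z_t) = Δ + ½ S(Δ, Δ) + O(|Δ|³)`. Either estimate forces
`Δ = F_{x_{s,t}}(z_s) + O(ε²)`, so that `Δ` may be replaced by `F_{x_{s,t}}(z_s)` in the quadratic
term at the cost of `O(ε³)`. On the other side `H_s - G_s = S(F ·, F ·)` is symmetric, and a
weak-geometric `𝕏_{s,t}` is seen by symmetric forms as `½ x_{s,t} ⊗ x_{s,t}`: the two quadratic
terms cancel. -/

open Asymptotics Filter Set Topology

section Localization

variable {E V : Type*} [Norm E] [SeminormedAddCommGroup V]

theorem isBigO_nhdsSet_inf_principal_of_isCompact {X : Type*} [TopologicalSpace X] {K S : Set X}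
    (hK : IsCompact K) {f : X → E} {g : X → V} (h : ∀ x ∈ K, f =O[𝓝[S] x] g) :
    f =O[𝓝ˢ K ⊓ 𝓟 S] g := by
  refine hK.induction_on (p := fun A => f =O[𝓝ˢ A ⊓ 𝓟 S] g) (by simp)
    (fun A B hAB hB => hB.mono (inf_le_inf_right _ (nhdsSet_mono hAB)))
    (fun A B hA hB => ?_) (fun x hx => ?_)
  · rw [nhdsSet_union, inf_sup_right]
    exact hA.sup hB
  · obtain ⟨c, hc⟩ := (h x hx).bound
    obtain ⟨U, hU, hUo, hxU⟩ := eventually_nhds_iff.1 (eventually_nhdsWithin_iff.1 hc)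
    refine ⟨U, mem_nhdsWithin_of_mem_nhds (hUo.mem_nhds hxU), .of_bound c ?_⟩
    rw [hUo.nhdsSet_eq, inf_principal, eventually_principal]
    exact fun y hy => hU y hy.1 hy.2

/-- The simplex `{(s, t) : a ≤ s ≤ t ≤ b}`, whose points are the intervals `[s, t] ⊆ [a, b]`. -/
def timeSimplex (a b : ℝ) : Set (ℝ × ℝ) := {q | a ≤ q.1 ∧ q.1 ≤ q.2 ∧ q.2 ≤ b}

theorem exists_bound_iff_forall_isBigO {a b : ℝ} {f : ℝ → ℝ → E} {g : ℝ → ℝ → ℝ}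
    (hg : ∀ q ∈ timeSimplex a b, 0 ≤ g q.1 q.2) :
    (∃ C δ : ℝ, 0 < δ ∧ ∀ ⦃s t : ℝ⦄, a ≤ s → s ≤ t → t ≤ b → t - s ≤ δ →
        ‖f s t‖ ≤ C * g s t) ↔
      ∀ r ∈ Icc a b, (fun q : ℝ × ℝ => f q.1 q.2) =O[𝓝[timeSimplex a b] (r, r)]
        fun q => g q.1 q.2 := by
  constructor
  · rintro ⟨C, δ, hδ, h⟩ r -
    have hshort : ∀ᶠ q : ℝ × ℝ in 𝓝 (r, r), q.2 - q.1 < δ :=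
      (continuous_snd.sub continuous_fst).continuousAt.eventually_lt_const (by simpa using hδ)
    refine .of_bound C ?_
    filter_upwards [nhdsWithin_le_nhds hshort, self_mem_nhdsWithin] with q hq hqS
    rw [Real.norm_of_nonneg (hg q hqS)]
    exact h hqS.1 hqS.2.1 hqS.2.2 hq.le
  · intro h
    have hdiag : IsCompact ((fun r : ℝ => (r, r)) '' Icc a b) :=
      isCompact_Icc.image (by fun_prop)
    obtain ⟨C, hC⟩ := (isBigO_nhdsSet_inf_principal_of_isCompact hdiag
      (forall_mem_image.2 h)).bound
    obtain ⟨δ, hδ, hδC⟩ :=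
      ((Metric.hasBasis_nhdsSet_cthickening hdiag).inf_principal _).mem_iff.1 hC
    refine ⟨C, δ, hδ, fun s t has hst htb hts => ?_⟩
    have hmem : (s, t) ∈ timeSimplex a b := ⟨has, hst, htb⟩
    have hnear : dist (s, t) (s, s) ≤ δ := by
      rwa [dist_prod_same_left, Real.dist_eq, abs_of_nonneg (sub_nonneg.2 hst)]
    have hbound : ‖f s t‖ ≤ C * ‖g s t‖ := hδC ⟨Metric.mem_cthickening_of_dist_le _ _ _ _
      (mem_image_of_mem _ ⟨has, hst.trans htb⟩) hnear, hmem⟩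
    rwa [Real.norm_of_nonneg (hg _ hmem)] at hbound

end Localization

variable {E V : Type*} [NormedAddCommGroup E] [NormedSpace ℝ E]
  [NormedAddCommGroup V] [NormedSpace ℝ V]

section Taylor

/-- The partial derivative of `f : E × E → V` in its second variable. -/
def fderivSnd (f : E × E → V) (q : E × E) : E →L[ℝ] V := fderiv ℝ (fun v => f (q.1, v)) q.2

theorem contDiffAt_fderivSnd {f : E × E → V} {q : E × E} {m n : WithTop ℕ∞}
    (hf : ContDiffAt ℝ n f q) (hmn : m + 1 ≤ n) : ContDiffAt ℝ m (fderivSnd f) q := by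
  refine ContDiffAt.fderiv (f := fun (q : E × E) v => f (q.1, v)) ?_ contDiffAt_snd hmn
  exact ContDiffAt.comp (q, q.2) hf (by fun_prop)

theorem hasFDerivAt_fderivSnd {f : E × E → V} {q : E × E} (hf : DifferentiableAt ℝ f q) :
    HasFDerivAt (fun v => f (q.1, v)) (fderivSnd f q) q.2 :=
  (hf.comp q.2 (hasFDerivAt_prodMk_right q.1 q.2).differentiableAt).hasFDerivAt

theorem isBigO_pow_succ_of_hasFDerivAt_snd {f : E × E → V} {f' : E × E → E →L[ℝ] V} {u : E} {n : ℕ}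
    (hf : ∀ᶠ q in 𝓝 (u, u), HasFDerivAt (fun v => f (q.1, v)) (f' q) q.2)
    (hf' : f' =O[𝓝 (u, u)] fun q => ‖q.2 - q.1‖ ^ n) (hdiag : ∀ v, f (v, v) = 0) :
    f =O[𝓝 (u, u)] fun q => ‖q.2 - q.1‖ ^ (n + 1) := by
  obtain ⟨C, hC0, hC⟩ := hf'.exists_nonneg
  obtain ⟨ρ, hρ, hball⟩ := Metric.eventually_nhds_iff_ball.1 (hf.and hC.bound)
  refine .of_bound C (Metric.eventually_nhds_iff_ball.2 ⟨ρ, hρ, fun ⟨v, w⟩ hvw => ?_⟩)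
  rw [← ball_prod_same] at hvw hball
  have hseg : ∀ c ∈ segment ℝ v w, (v, c) ∈ Metric.ball u ρ ×ˢ Metric.ball u ρ := fun c hc =>
    ⟨hvw.1, (convex_ball u ρ).segment_subset hvw.1 hvw.2 hc⟩
  have hderiv : ∀ c ∈ segment ℝ v w, ‖f' (v, c)‖ ≤ C * ‖w - v‖ ^ n := fun c hc => by
    have hcv : ‖c - v‖ ≤ ‖w - v‖ := by
      simpa [dist_eq_norm, norm_sub_rev v w] using segment_subset_closedBall_left v w hc
    calc ‖f' (v, c)‖ ≤ C * ‖‖c - v‖ ^ n‖ := (hball _ (hseg c hc)).2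
      _ ≤ C * ‖w - v‖ ^ n := by rw [norm_pow, norm_norm]; gcongr
  have hmvt : ‖f (v, w) - f (v, v)‖ ≤ C * ‖w - v‖ ^ n * ‖w - v‖ :=
    (convex_segment v w).norm_image_sub_le_of_norm_hasFDerivWithin_le (f := fun c => f (v, c))
      (fun c hc => (hball _ (hseg c hc)).1.hasFDerivWithinAt) hderiv
      (left_mem_segment ℝ v w) (right_mem_segment ℝ v w)
  simpa [hdiag, pow_succ, mul_assoc] using hmvt

theorem fderivSnd_fderivSnd_symm {f : E × E → V} {q : E × E} (hf : ContDiffAt ℝ 2 f q) (v w : E) :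
    fderivSnd (fderivSnd f) q v w = fderivSnd (fderivSnd f) q w v := by
  have hslice : ContDiffAt ℝ 2 (fun c => f (q.1, c)) q.2 :=
    ContDiffAt.comp q.2 hf (by fun_prop)
  exact hslice.isSymmSndFDerivAt (by simp) v w

theorem isBigO_taylor_zero_snd {f : E × E → V} {u : E} (hf : ContDiffAt ℝ 1 f (u, u)) :
    (fun q : E × E => f q - f (q.1, q.1)) =O[𝓝 (u, u)] fun q => ‖q.2 - q.1‖ := by
  have hf' : ContDiffAt ℝ 0 (fderivSnd f) (u, u) := contDiffAt_fderivSnd hf (by norm_num)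
  have hbdd : fderivSnd f =O[𝓝 (u, u)] fun q => ‖q.2 - q.1‖ ^ 0 := by
    simpa only [pow_zero] using hf'.continuousAt.tendsto.isBigO_one ℝ
  have hderiv : ∀ᶠ q in 𝓝 (u, u),
      HasFDerivAt (fun v => f (q.1, v) - f (q.1, q.1)) (fderivSnd f q) q.2 :=
    (hf.eventually (by simp)).mono fun q hq =>
      (hasFDerivAt_fderivSnd (hq.differentiableAt (by simp))).sub_const _
  simpa only [zero_add, pow_one] using isBigO_pow_succ_of_hasFDerivAt_snd hderiv hbdd (by simp)

theorem isBigO_taylor_one_snd {f : E × E → V} {u : E} (hf : ContDiffAt ℝ 2 f (u, u)) :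
    (fun q : E × E => f q - f (q.1, q.1) - fderivSnd f (q.1, q.1) (q.2 - q.1))
      =O[𝓝 (u, u)] fun q => ‖q.2 - q.1‖ ^ 2 := by
  have horder := isBigO_taylor_zero_snd (contDiffAt_fderivSnd hf (m := 1) (by norm_num))
  have hderiv : ∀ᶠ q in 𝓝 (u, u),
      HasFDerivAt (fun v => f (q.1, v) - f (q.1, q.1) - fderivSnd f (q.1, q.1) (v - q.1))
        (fderivSnd f q - fderivSnd f (q.1, q.1)) q.2 :=
    (hf.eventually (by simp)).mono fun q hq =>
      ((hasFDerivAt_fderivSnd (hq.differentiableAt (by simp))).sub_const _).sub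
        ((fderivSnd f (q.1, q.1)).hasFDerivAt.comp q.2 ((hasFDerivAt_id q.2).sub_const q.1))
  exact isBigO_pow_succ_of_hasFDerivAt_snd hderiv (by simpa only [pow_one] using horder) (by simp)

theorem hasFDerivAt_half_smul_quadratic {B : E →L[ℝ] E →L[ℝ] V} (hB : ∀ v w, B v w = B w v)
    (u w : E) : HasFDerivAt (fun v => (1 / 2 : ℝ) • B (v - u) (v - u)) (B (w - u)) w := by
  have hsub : HasFDerivAt (fun v => v - u) (ContinuousLinearMap.id ℝ E) w :=
    (hasFDerivAt_id w).sub_const u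
  refine (((B.hasFDerivAt.comp w hsub).clm_apply hsub).const_smul (1 / 2 : ℝ)).congr_fderiv ?_
  ext v
  simp only [ContinuousLinearMap.comp_id, add_apply, smul_apply, ContinuousLinearMap.flip_apply,
    Function.comp_apply, hB v]
  module

theorem isBigO_taylor_two_snd {f : E × E → V} {u : E} (hf : ContDiffAt ℝ 3 f (u, u)) :
    (fun q : E × E => f q - f (q.1, q.1) - fderivSnd f (q.1, q.1) (q.2 - q.1) -
        (1 / 2 : ℝ) • fderivSnd (fderivSnd f) (q.1, q.1) (q.2 - q.1) (q.2 - q.1))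
      =O[𝓝 (u, u)] fun q => ‖q.2 - q.1‖ ^ 3 := by
  have hdiag : Tendsto (fun q : E × E => (q.1, q.1)) (𝓝 (u, u)) (𝓝 (u, u)) :=
    (by fun_prop : Continuous fun q : E × E => (q.1, q.1)).tendsto (u, u)
  have hsmooth : ∀ᶠ q in 𝓝 (u, u), ContDiffAt ℝ 3 f q := hf.eventually (by simp)
  refine isBigO_pow_succ_of_hasFDerivAt_snd ?_
    (isBigO_taylor_one_snd (contDiffAt_fderivSnd hf (m := 2) (by norm_num))) (by simp)
  filter_upwards [hsmooth, hdiag.eventually hsmooth] with q hq hq'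
  exact (((hasFDerivAt_fderivSnd (hq.differentiableAt (by simp))).sub_const _).sub
    ((fderivSnd f (q.1, q.1)).hasFDerivAt.comp q.2 ((hasFDerivAt_id q.2).sub_const q.1))).sub
    (hasFDerivAt_half_smul_quadratic (fderivSnd_fderivSnd_symm (hq'.of_le (by norm_num))) q.1 q.2)

end Taylor

section Substitution

variable {α : Type*} {l : Filter α}

theorem isBigO_pow_succ_pow {ε : α → ℝ} (hε : ε =O[l] fun _ => (1 : ℝ)) (n : ℕ) :
    (ε ^ (n + 1)) =O[l] (ε ^ n) :=
  (hε.mul (isBigO_refl (ε ^ n) l)).congr (fun i => (pow_succ' (ε i) n).symm) fun _ => one_mul _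

theorem isBigO_clm_apply {A : α → E →L[ℝ] V} {v : α → E} {g h : α → ℝ}
    (hA : A =O[l] g) (hv : v =O[l] h) : (fun i => A i (v i)) =O[l] fun i => g i * h i :=
  (isBigO_of_le l fun i => by
    simpa using (A i).le_opNorm (v i)).trans (hA.norm_left.mul hv.norm_left)

variable {S : α → E →L[ℝ] E →L[ℝ] E} {P Δ f g : α → E} {ε : α → ℝ}

theorem isBigO_quadratic_substitution (hS : S =O[l] fun _ => (1 : ℝ))
    (hP : (fun i => P i - Δ i - (1 / 2 : ℝ) • S i (Δ i) (Δ i)) =O[l] fun i => ‖Δ i‖ ^ 3)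
    (hε : ε =O[l] fun _ => (1 : ℝ)) (hf : f =O[l] ε) (hΔf : (fun i => Δ i - f i) =O[l] (ε ^ 2)) :
    (fun i => P i - Δ i - (1 / 2 : ℝ) • S i (f i) (f i)) =O[l] (ε ^ 3) := by
  have hε2 : (ε ^ 2) =O[l] ε := by simpa using isBigO_pow_succ_pow hε 1
  have hΔ : Δ =O[l] ε := by simpa using (hΔf.trans hε2).add hf
  have hleft : (fun i => S i (Δ i) (Δ i - f i)) =O[l] (ε ^ 3) := by
    simpa [Pi.pow_def, ← pow_succ'] using isBigO_clm_apply (isBigO_clm_apply hS hΔ) hΔf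
  have hright : (fun i => S i (Δ i - f i) (f i)) =O[l] (ε ^ 3) := by
    simpa [Pi.pow_def, ← pow_succ] using isBigO_clm_apply (isBigO_clm_apply hS hΔf) hf
  refine ((hP.trans (hΔ.norm_left.pow 3)).add
    ((hleft.add hright).const_smul_left (1 / 2 : ℝ))).congr_left fun i => ?_
  simp only [Pi.smul_apply, map_sub, sub_apply]
  module

theorem isBigO_of_quadratic_expansion (hS : S =O[l] fun _ => (1 : ℝ)) (hΔ : Tendsto Δ l (𝓝 0))
    (hP : (fun i => P i - Δ i - (1 / 2 : ℝ) • S i (Δ i) (Δ i)) =O[l] fun i => ‖Δ i‖ ^ 3) :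
    (fun i => P i - Δ i) =O[l] (fun i => ‖Δ i‖ ^ 2) := by
  have hcube : (fun i => ‖Δ i‖ ^ 3) =O[l] fun i => ‖Δ i‖ ^ 2 :=
    ((isLittleO_pow_pow (by norm_num)).comp_tendsto (by simpa using hΔ.norm)).isBigO
  have hquad : (fun i => (1 / 2 : ℝ) • S i (Δ i) (Δ i)) =O[l] fun i => ‖Δ i‖ ^ 2 := by
    have hnorm := (isBigO_refl Δ l).norm_right
    simpa [sq, Pi.smul_def] using
      (isBigO_clm_apply (isBigO_clm_apply hS hnorm) hnorm).const_smul_left (1 / 2 : ℝ)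
  simpa using (hP.trans hcube).add hquad

theorem isBigO_quadratic_expansion_iff (hS : S =O[l] fun _ => (1 : ℝ)) (hΔ : Tendsto Δ l (𝓝 0))
    (hP : (fun i => P i - Δ i - (1 / 2 : ℝ) • S i (Δ i) (Δ i)) =O[l] fun i => ‖Δ i‖ ^ 3)
    (hε : ε =O[l] fun _ => (1 : ℝ)) (hf : f =O[l] ε) (hg : g =O[l] (ε ^ 2)) :
    (fun i => Δ i - f i - g i) =O[l] (ε ^ 3) ↔
      (fun i => P i - f i - (g i + (1 / 2 : ℝ) • S i (f i) (f i))) =O[l] (ε ^ 3) := by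
  have hε2 : (ε ^ 2) =O[l] ε := by simpa using isBigO_pow_succ_pow hε 1
  have hε3 : (ε ^ 3) =O[l] (ε ^ 2) := isBigO_pow_succ_pow hε 2
  have hff : (fun i => (1 / 2 : ℝ) • S i (f i) (f i)) =O[l] (ε ^ 2) := by
    simpa [sq, Pi.mul_def, Pi.smul_def] using
      (isBigO_clm_apply (isBigO_clm_apply hS hf) hf).const_smul_left (1 / 2 : ℝ)
  have hsubst (hΔf : (fun i => Δ i - f i) =O[l] (ε ^ 2)) :=
    isBigO_quadratic_substitution hS hP hε hf hΔf
  constructor <;> intro h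
  · have hΔf : (fun i => Δ i - f i) =O[l] (ε ^ 2) := by
      simpa only [sub_add_cancel] using (h.trans hε3).add hg
    exact (h.add (hsubst hΔf)).congr_left fun i => by abel
  · have hPf : (fun i => P i - f i) =O[l] (ε ^ 2) := by
      simpa only [sub_add_cancel] using (h.trans hε3).add (hg.add hff)
    have hPΔ := isBigO_of_quadratic_expansion hS hΔ hP
    have hP_small : (fun i => P i - Δ i) =o[l] Δ :=
      hPΔ.trans_isLittleO ((isLittleO_norm_pow_id one_lt_two).comp_tendsto hΔ)
    have hΔε : Δ =O[l] ε := by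
      have hPε : P =O[l] ε := by simpa only [sub_add_cancel] using (hPf.trans hε2).add hf
      exact hP_small.right_isBigO_add.trans (by simpa only [sub_add_cancel] using hPε)
    have hΔf : (fun i => Δ i - f i) =O[l] (ε ^ 2) :=
      (hPf.sub (hPΔ.trans (hΔε.norm_left.pow 2))).congr_left fun i => by abel
    exact (h.sub (hsubst hΔf)).congr_left fun i => by abel

end Substitution

section TensorApplication

theorem tapply_tensorE {n m : ℕ} (B : Euc n →L[ℝ] Euc m →L[ℝ] V) (v : Euc n) (w : Euc m) :
    tapply (fun w₁ w₂ => B w₁ w₂) (tensorE v w) = B v w := by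
  have hsum {l : ℕ} (y : Euc l) : ∑ i, y i • (eb i : Euc l) = y := by
    simpa [eb] using (EuclideanSpace.basisFun (Fin l) ℝ).sum_repr y
  conv_rhs => rw [← hsum v, ← hsum w]
  simp only [tapply, tensorE, Fintype.sum_prod_type, map_sum, map_smul, sum_apply, smul_apply,
    Finset.smul_sum, smul_smul, PiLp.continuousLinearEquiv_symm_apply]
  rw [Finset.sum_comm]
  simp only [mul_comm]

theorem tapply_eq_half_smul_of_symm {k : ℕ} {B : Euc k →L[ℝ] Euc k →L[ℝ] V}
    (hB : ∀ v w, B v w = B w v) {v : Euc k} {X : EuclideanSpace ℝ (Fin k × Fin k)}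
    (hX : ∀ i j, X (i, j) + X (j, i) = v i * v j) :
    tapply (fun w₁ w₂ => B w₁ w₂) X = (1 / 2 : ℝ) • B v v := by
  have hswap : tapply (fun w₁ w₂ => B w₁ w₂) X =
      ∑ q : Fin k × Fin k, X q.swap • B (eb q.1) (eb q.2) := by
    refine Fintype.sum_equiv (Equiv.prodComm _ _) _ _ fun q => ?_
    simp [hB (eb q.1)]
  have hdouble : tapply (fun w₁ w₂ => B w₁ w₂) X + tapply (fun w₁ w₂ => B w₁ w₂) X = B v v := by
    conv_lhs => enter [2]; rw [hswap]
    rw [← tapply_tensorE]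
    simp only [tapply, ← Finset.sum_add_distrib, ← add_smul]
    exact Finset.sum_congr rfl fun q _ => congrArg (· • _) (hX q.1 q.2)
  rw [← hdouble]
  module

theorem isBigO_tapply {α : Type*} {l : Filter α} {n m : ℕ} {B : α → Euc n → Euc m → V}
    {X : α → EuclideanSpace ℝ (Fin n × Fin m)}
    (hB : ∀ i j, (fun a => B a (eb i) (eb j)) =O[l] fun _ => (1 : ℝ)) :
    (fun a => tapply (B a) (X a)) =O[l] X := by
  refine IsBigO.fun_sum fun q _ => ?_
  have hcoord : (fun a => X a q) =O[l] fun a => ‖X a‖ :=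
    isBigO_of_le l fun a => by simpa using PiLp.norm_apply_le (X a) q
  simpa using hcoord.smul (hB q.1 q.2)

end TensorApplication

section RoughDifferentialEquation

variable {k : ℕ}

/-- The second-order coefficient `(w, w̃) ↦ (∂_{F_w(u)} F_{w̃})(u)` of the expansion of increments,
extending `rdeQuad` to an arbitrary normed space. -/
def incrementQuad (F : E → Euc k →L[ℝ] E) (u : E) (w wt : Euc k) : E :=
  fderiv ℝ (fun c => F c wt) u (F u w)

/-- The second-order coefficient `(w, w̃) ↦ ∂_{F_w(u)}[c ↦ (D₂ψ)(u, c) F_{w̃}(c)](u)` of the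
expansion of `ψ`-logarithms. -/
def logQuad (ψ : E × E → E) (F : E → Euc k →L[ℝ] E) (u : E) (w wt : Euc k) : E :=
  fderiv ℝ (fun c => fderiv ℝ (fun e => ψ (u, e)) c (F c wt)) u (F u w)

variable {F : E → Euc k →L[ℝ] E} {ψ : E × E → E} {u : E}

theorem logQuad_eq_incrementQuad_add (hF : DifferentiableAt ℝ F u) (hψ : ContDiffAt ℝ 2 ψ (u, u))
    (hψ_id : fderivSnd ψ (u, u) = .id ℝ E) (w wt : Euc k) :
    logQuad ψ F u w wt =
      incrementQuad F u w wt + fderivSnd (fderivSnd ψ) (u, u) (F u w) (F u wt) := by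
  have hψ' : DifferentiableAt ℝ (fun c => fderivSnd ψ (u, c)) u :=
    (hasFDerivAt_fderivSnd ((contDiffAt_fderivSnd hψ (m := 1) (by norm_num)).differentiableAt
      (by simp))).differentiableAt
  have hFwt : DifferentiableAt ℝ (fun c => F c wt) u := hF.clm_apply (by fun_prop)
  have hprod := congrArg (fun A => A (F u w)) (fderiv_clm_apply hψ' hFwt)
  simp only [hψ_id, add_apply, ContinuousLinearMap.comp_apply, ContinuousLinearMap.flip_apply,
    ContinuousLinearMap.id_apply] at hprod
  exact hprod

theorem tapply_logQuad (hF : DifferentiableAt ℝ F u) (hψ : ContDiffAt ℝ 2 ψ (u, u))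
    (hψ_id : fderivSnd ψ (u, u) = .id ℝ E) {v : Euc k} {X : EuclideanSpace ℝ (Fin k × Fin k)}
    (hX : ∀ i j, X (i, j) + X (j, i) = v i * v j) :
    tapply (logQuad ψ F u) X = tapply (incrementQuad F u) X +
      (1 / 2 : ℝ) • fderivSnd (fderivSnd ψ) (u, u) (F u v) (F u v) := by
  have hsymm := tapply_eq_half_smul_of_symm
    (B := (fderivSnd (fderivSnd ψ) (u, u)).bilinearComp (F u) (F u))
    (fun _ _ => fderivSnd_fderivSnd_symm hψ _ _) hX
  simp only [ContinuousLinearMap.bilinearComp_apply] at hsymm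
  rw [← hsymm]
  simp only [tapply, logQuad_eq_incrementQuad_add hF hψ hψ_id, smul_add, Finset.sum_add_distrib]

variable {α : Type*} {l : Filter α} {c : E} {y z : α → E}

theorem isBigO_tapply_incrementQuad (hF : ContDiffAt ℝ 1 F c) (hy : Tendsto y l (𝓝 c))
    {X : α → EuclideanSpace ℝ (Fin k × Fin k)} :
    (fun i => tapply (incrementQuad F (y i)) (X i)) =O[l] X := by
  refine isBigO_tapply fun i j => ?_
  have hcont : ContinuousAt (fun u => fderiv ℝ F u (F u (eb i)) (eb j)) c :=
    ((hF.continuousAt_fderiv (by simp)).clm_apply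
      (hF.continuousAt.clm_apply continuousAt_const)).clm_apply continuousAt_const
  have hdiff : ∀ᶠ u in 𝓝 c, DifferentiableAt ℝ F u :=
    (hF.eventually (by simp)).mono fun u hu => hu.differentiableAt (by simp)
  refine ((hcont.tendsto.comp hy).isBigO_one ℝ).congr' ?_ .rfl
  filter_upwards [hy.eventually hdiff] with a ha
  simp [incrementQuad, fderiv_clm_apply ha (differentiableAt_const _)]

theorem isBigO_increment_iff_isBigO_log (hF : ContDiffAt ℝ 1 F c) (hψ : ContDiffAt ℝ 3 ψ (c, c))
    (hy : Tendsto y l (𝓝 c)) (hz : Tendsto z l (𝓝 c))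
    (hψ_zero : ∀ᶠ i in l, ψ (y i, y i) = 0)
    (hψ_id : ∀ᶠ i in l, fderivSnd ψ (y i, y i) = .id ℝ E)
    {v : α → Euc k} {X : α → EuclideanSpace ℝ (Fin k × Fin k)} {ε : α → ℝ}
    (hX_symm : ∀ᶠ i in l, ∀ m n, X i (m, n) + X i (n, m) = v i m * v i n)
    (hε : ε =O[l] fun _ => (1 : ℝ)) (hv : v =O[l] ε) (hX : X =O[l] (ε ^ 2)) :
    (fun i => z i - y i - F (y i) (v i) - tapply (incrementQuad F (y i)) (X i)) =O[l] (ε ^ 3) ↔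
      (fun i => ψ (y i, z i) - F (y i) (v i) - tapply (logQuad ψ F (y i)) (X i))
        =O[l] (ε ^ 3) := by
  have hyy : Tendsto (fun i => (y i, y i)) l (𝓝 (c, c)) := hy.prodMk_nhds hy
  have hψ₂ : ContDiffAt ℝ 1 (fderivSnd (fderivSnd ψ)) (c, c) :=
    contDiffAt_fderivSnd (contDiffAt_fderivSnd hψ (m := 2) (by norm_num)) (by norm_num)
  have htaylor : (fun i => ψ (y i, z i) - (z i - y i) - (1 / 2 : ℝ) •
      fderivSnd (fderivSnd ψ) (y i, y i) (z i - y i) (z i - y i)) =O[l]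
        fun i => ‖z i - y i‖ ^ 3 := by
    refine ((isBigO_taylor_two_snd hψ).comp_tendsto (hy.prodMk_nhds hz)).congr' ?_ .rfl
    filter_upwards [hψ_zero, hψ_id] with i h₀ h₁
    simp [h₀, h₁]
  have hFv : (fun i => F (y i) (v i)) =O[l] ε := by
    simpa using isBigO_clm_apply ((hF.continuousAt.tendsto.comp hy).isBigO_one ℝ) hv
  rw [isBigO_quadratic_expansion_iff ((hψ₂.continuousAt.tendsto.comp hyy).isBigO_one ℝ)
    (by simpa using hz.sub hy) htaylor hε hFv ((isBigO_tapply_incrementQuad hF hy).trans hX)]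
  refine isBigO_congr ?_ .rfl
  filter_upwards [hψ_id, hX_symm, hy.eventually (hF.eventually (by simp)),
    hyy.eventually (hψ.eventually (by simp))] with i h₁ hsymm hFi hψi
  rw [tapply_logQuad (hFi.differentiableAt (by simp)) (hψi.of_le (by norm_num)) h₁ hsymm]
  rfl

theorem rpow_div_eq_rpow_one_div_pow {r : ℝ} (hr : 0 ≤ r) (n : ℕ) (p : ℝ) :
    r ^ (n / p) = (r ^ (1 / p)) ^ n := by
  rw [← Real.rpow_mul_natCast hr, one_div_mul_eq_div]

theorem isBigO_one_control_rpow {T r s : ℝ} (hs : 0 ≤ s) {ω : ℝ → ℝ → ℝ} (hω : IsControl T ω)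
    (hr : r ∈ Icc 0 T) :
    (fun q : ℝ × ℝ => ω q.1 q.2 ^ s) =O[𝓝[timeSimplex 0 T] (r, r)] fun _ => (1 : ℝ) :=
  Tendsto.isBigO_one ℝ ((hω.cont (r, r) ⟨hr.1, le_rfl, hr.2⟩).rpow_const (.inr hs))

theorem rde_log_characterization_general {T p : ℝ} (hp : 0 < p) {ω : ℝ → ℝ → ℝ}
    (hω : IsControl T ω) {x : ℝ → Euc k} {XX : ℝ → ℝ → EuclideanSpace ℝ (Fin k × Fin k)}
    (hX : IsRoughPath T p ω x XX) (hgeo : IsWeakGeometric T x XX)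
    {a b : ℝ} (ha : 0 ≤ a) (hbT : b ≤ T) {z : ℝ → E} (hz : ContinuousOn z (Icc a b))
    (hF : ∀ s ∈ Icc a b, ContDiffAt ℝ 1 F (z s))
    (hψ : ∀ s ∈ Icc a b, ContDiffAt ℝ 3 ψ (z s, z s))
    (hψ_zero : ∀ s ∈ Icc a b, ψ (z s, z s) = 0)
    (hψ_id : ∀ s ∈ Icc a b, fderiv ℝ (fun w => ψ (z s, w)) (z s) = .id ℝ E) :
    (∃ C δ : ℝ, 0 < δ ∧ ∀ ⦃s t : ℝ⦄, a ≤ s → s ≤ t → t ≤ b → t - s ≤ δ →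
        ‖z t - z s - F (z s) (x t - x s) - tapply (incrementQuad F (z s)) (XX s t)‖
          ≤ C * ω s t ^ (3 / p)) ↔
    (∃ C δ : ℝ, 0 < δ ∧ ∀ ⦃s t : ℝ⦄, a ≤ s → s ≤ t → t ≤ b → t - s ≤ δ →
        ‖ψ (z s, z t) - F (z s) (x t - x s) - tapply (logQuad ψ F (z s)) (XX s t)‖
          ≤ C * ω s t ^ (3 / p)) := by
  have hsub : timeSimplex a b ⊆ timeSimplex 0 T := fun q hq =>
    ⟨ha.trans hq.1, hq.2.1, hq.2.2.trans hbT⟩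
  have hω₀ : ∀ q ∈ timeSimplex a b, 0 ≤ ω q.1 q.2 := fun q hq =>
    hω.nonneg (hsub hq).1 hq.2.1 (hsub hq).2.2
  have hpow : ∀ q ∈ timeSimplex a b, 0 ≤ ω q.1 q.2 ^ (3 / p) := fun q hq =>
    Real.rpow_nonneg (hω₀ q hq) _
  rw [exists_bound_iff_forall_isBigO hpow, exists_bound_iff_forall_isBigO hpow]
  refine forall₂_congr fun r hr => ?_
  have hmem : ∀ᶠ q in 𝓝[timeSimplex a b] (r, r), q ∈ timeSimplex a b := self_mem_nhdsWithin
  have hfst : Tendsto (fun q : ℝ × ℝ => z q.1) (𝓝[timeSimplex a b] (r, r)) (𝓝 (z r)) :=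
    (hz r hr).comp (t := Icc a b) continuousWithinAt_fst fun q hq => ⟨hq.1, hq.2.1.trans hq.2.2⟩
  have hsnd : Tendsto (fun q : ℝ × ℝ => z q.2) (𝓝[timeSimplex a b] (r, r)) (𝓝 (z r)) :=
    (hz r hr).comp (t := Icc a b) continuousWithinAt_snd fun q hq => ⟨hq.1.trans hq.2.1, hq.2.2⟩
  have hε₃ : (fun q : ℝ × ℝ => ω q.1 q.2 ^ (3 / p)) =ᶠ[𝓝[timeSimplex a b] (r, r)]
      (fun q => ω q.1 q.2 ^ (1 / p)) ^ 3 := hmem.mono fun q hq =>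
    rpow_div_eq_rpow_one_div_pow (hω₀ q hq) 3 p
  rw [isBigO_congr .rfl hε₃, isBigO_congr .rfl hε₃]
  refine isBigO_increment_iff_isBigO_log (v := fun q => x q.2 - x q.1) (hF r hr) (hψ r hr)
    hfst hsnd ?_ ?_ ?_ ?_ ?_ ?_
  · exact hmem.mono fun q hq => hψ_zero _ ⟨hq.1, hq.2.1.trans hq.2.2⟩
  · exact hmem.mono fun q hq => hψ_id _ ⟨hq.1, hq.2.1.trans hq.2.2⟩
  · exact hmem.mono fun q hq => hgeo (hsub hq).1 hq.2.1 (hsub hq).2.2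
  · exact (isBigO_one_control_rpow (by positivity) hω ⟨ha.trans hr.1, hr.2.trans hbT⟩).mono
      (nhdsWithin_mono _ hsub)
  · exact .of_bound' (hmem.mono fun q hq =>
      (hX.bound_x (hsub hq).1 hq.2.1 (hsub hq).2.2).trans (le_abs_self _))
  · refine .of_bound' (hmem.mono fun q hq => ?_)
    have hbound := hX.bound_XX (hsub hq).1 hq.2.1 (hsub hq).2.2
    exact (hbound.trans_eq (rpow_div_eq_rpow_one_div_pow (hω₀ q hq) 2 p)).trans (le_abs_self _)

end RoughDifferentialEquation

/-- **Logarithm characterization of solving a rough differential equation on `ℝ^d`**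
(Proposition 5.1 of Driver–Semko): the RDE Davie-type expansion in terms of increments
`z_t − z_s` is equivalent to the one in terms of logarithm increments `ψ(z_s, z_t)`. -/
theorem rde_log_characterization
    {T p : ℝ} (hT : 0 < T) (hp1 : 1 ≤ p) (hp3 : p < 3) {k : ℕ} (hk : 1 ≤ k)
    {ω : ℝ → ℝ → ℝ} (hω : IsControl T ω)
    {x : ℝ → Euc k} {XX : ℝ → ℝ → EuclideanSpace ℝ (Fin k × Fin k)}
    (hX : IsRoughPath T p ω x XX) (hgeo : IsWeakGeometric T x XX)
    {d : ℕ} {F : Euc d → Euc k →L[ℝ] Euc d} (hF : ContDiff ℝ (⊤ : ℕ∞) F)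
    {D : Set (Euc d × Euc d)} {ψ : Euc d × Euc d → Euc d} (hψ : IsLocalLog D ψ)
    {a b : ℝ} (ha : 0 ≤ a) (hab : a ≤ b) (hbT : b ≤ T)
    {z : ℝ → Euc d} (hz : ContinuousOn z (Set.Icc a b))
    {W₀ : Set (Euc d)} (hW₀open : IsOpen W₀) (hW₀conv : Convex ℝ W₀)
    (hzW : ∀ s ∈ Set.Icc a b, z s ∈ W₀) (hWD : W₀ ×ˢ W₀ ⊆ D) :
    (∃ C δ : ℝ, 0 < δ ∧ ∀ ⦃s t : ℝ⦄, a ≤ s → s ≤ t → t ≤ b → t - s ≤ δ →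
        ‖z t - z s - F (z s) (x t - x s) - tapply (rdeQuad F (z s)) (XX s t)‖
          ≤ C * ω s t ^ (3 / p)) ↔
    (∃ C δ : ℝ, 0 < δ ∧ ∀ ⦃s t : ℝ⦄, a ≤ s → s ≤ t → t ≤ b → t - s ≤ δ →
        ‖ψ (z s, z t) - F (z s) (x t - x s) -
            tapply (fun w wt =>
              fderiv ℝ (fun c => fderiv ℝ (fun e => ψ (z s, e)) c (F c wt)) (z s)
                (F (z s) w)) (XX s t)‖
          ≤ C * ω s t ^ (3 / p)) := by
  have hdiag : ∀ s ∈ Icc a b, (z s, z s) ∈ D := fun s hs => hWD ⟨hzW s hs, hzW s hs⟩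
  exact rde_log_characterization_general (zero_lt_one.trans_le hp1) hω hX hgeo ha hbT hz
    (fun s _ => hF.contDiffAt.of_le (by exact_mod_cast le_top))
    (fun s hs => (hψ.smooth.contDiffAt (hψ.open_dom.mem_nhds (hdiag s hs))).of_le
      (WithTop.coe_le_coe.2 le_top))
    (fun s hs => hψ.diag_zero _ (hdiag s hs)) (fun s hs => hψ.diag_deriv _ (hdiag s hs))
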